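/- arXiv:2009.03522 — 10 statements merged into one kernel-verified Lean document; each statement's English description precedes it below -/
import Mathlib

section
/- Let V_x^1, V_x^2, V_y^1, V_y^2, Δ_xV_x^1, Δ_xV_x^2, Δ_yV_y^1, Δ_yV_y^2, Δ_xR^z, Δ_yR^z be real numbers. Define the second-order curl-preserving reconstruction V^x(x,y) = (V_x^1 + Δ_xV_x^1·x)(1/2 − y) + (V_x^2 + Δ_xV_x^2·x)(1/2 + y) + a_yy(1 − 4y²) and V^y(x,y) = (V_y^1 + Δ_yV_y^1·y)(1/2 − x) + (V_y^2 + Δ_yV_y^2·y)(1/2 + x) + b_xx(1 − 4x²), with b_xx = (−Δ_xR^z + Δ_xV_x^1 − Δ_xV_x^2)/8 and a_yy = (Δ_yR^z + Δ_yV_y^1 − Δ_yV_y^2)/8. Then for every (x,y) ∈ ℝ², ∂_x V^y − ∂_y V^x = (V_x^1 − V_x^2 + V_y^2 − V_y^1) + Δ_xR^z·x + Δ_yR^z·y. In particular, taking Δ_xR^z = Δ_yR^z = 0 and a vanishing discrete circulation V_x^1 − V_x^2 + V_y^2 − V_y^1 = 0 yields a reconstruction that is exactly curl-free at every point. -/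
/-- Derivative of the one-dimensional profile of the reconstruction. -/
theorem deriv_profile (A B c t : ℝ) :
    deriv (fun s : ℝ => A * (1 / 2 - s) + B * (1 / 2 + s) + c * (1 - 4 * s ^ 2)) t =
      -A + B - 8 * c * t := by
  have h1 := ((hasDerivAt_id' t).const_sub (1 / 2)).const_mul A
  have h2 := ((hasDerivAt_id' t).const_add (1 / 2)).const_mul B
  have h3 := ((((hasDerivAt_id' t).pow 2).const_mul 4).const_sub 1).const_mul c
  have h := (h1.add h2).add h3
  refine (HasDerivAt.deriv (f' := _) h).trans ?_
  norm_num
  ring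

/-- the second-order curl-preserving reconstruction on the unit
square, with the interior coefficients `a_yy`, `b_xx` given by eqn. (2.9),
reproduces the prescribed linear curl exactly at every point; in particular,
for vanishing circulation moments it is exactly curl-free. -/
theorem stmt_2 (Vx1 Vx2 Vy1 Vy2 dxVx1 dxVx2 dyVy1 dyVy2 dxRz dyRz ayy bxx : ℝ)
    (hb : bxx = (-dxRz + dxVx1 - dxVx2) / 8)
    (ha : ayy = (dyRz + dyVy1 - dyVy2) / 8) :
    (∀ x y : ℝ,
      deriv (fun x' : ℝ =>
          (Vy1 + dyVy1 * y) * (1 / 2 - x') + (Vy2 + dyVy2 * y) * (1 / 2 + x') +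
            bxx * (1 - 4 * x' ^ 2)) x -
        deriv (fun y' : ℝ =>
          (Vx1 + dxVx1 * x) * (1 / 2 - y') + (Vx2 + dxVx2 * x) * (1 / 2 + y') +
            ayy * (1 - 4 * y' ^ 2)) y =
      (Vx1 - Vx2 + Vy2 - Vy1) + dxRz * x + dyRz * y) ∧
    (dxRz = 0 → dyRz = 0 → Vx1 - Vx2 + Vy2 - Vy1 = 0 →
      ∀ x y : ℝ,
        deriv (fun x' : ℝ =>
            (Vy1 + dyVy1 * y) * (1 / 2 - x') + (Vy2 + dyVy2 * y) * (1 / 2 + x') +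
              bxx * (1 - 4 * x' ^ 2)) x -
          deriv (fun y' : ℝ =>
            (Vx1 + dxVx1 * x) * (1 / 2 - y') + (Vx2 + dxVx2 * x) * (1 / 2 + y') +
              ayy * (1 - 4 * y' ^ 2)) y = 0) := by
  have key : ∀ x y : ℝ,
      deriv (fun x' : ℝ =>
          (Vy1 + dyVy1 * y) * (1 / 2 - x') + (Vy2 + dyVy2 * y) * (1 / 2 + x') +
            bxx * (1 - 4 * x' ^ 2)) x -
        deriv (fun y' : ℝ =>
          (Vx1 + dxVx1 * x) * (1 / 2 - y') + (Vx2 + dxVx2 * x) * (1 / 2 + y') +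
            ayy * (1 - 4 * y' ^ 2)) y =
      (Vx1 - Vx2 + Vy2 - Vy1) + dxRz * x + dyRz * y := by
    intro x y
    rw [deriv_profile, deriv_profile, hb, ha]
    ring
  refine ⟨key, ?_⟩
  intro h1 h2 h3 x y
  rw [key x y, h1, h2, h3]
  ring
end

section
/- Let V_x^1, V_x^2, V_y^1, V_y^2, Δ_xV_x^i, Δ_xxV_x^i, Δ_yV_y^i, Δ_yyV_y^i (i = 1,2) and Δ_xR^z, Δ_yR^z, Δ_xxR^z, Δ_yyR^z, Δ_xyR^z be real numbers. Define the third-order reconstruction V^x(x,y) = [V_x^1 + Δ_xV_x^1·x + Δ_xxV_x^1·(x² − 1/12)](1/2 − y) + [V_x^2 + Δ_xV_x^2·x + Δ_xxV_x^2·(x² − 1/12)](1/2 + y) + a_yy(1 − 4y²) + a_yyy·y(1 − 4y²) + a_xyy·x(1 − 4y²) and V^y(x,y) = [V_y^1 + Δ_yV_y^1·y + Δ_yyV_y^1·(y² − 1/12)](1/2 − x) + [V_y^2 + Δ_yV_y^2·y + Δ_yyV_y^2·(y² − 1/12)](1/2 + x) + b_xx(1 − 4x²) + b_xxx·x(1 −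 4x²) + b_xxy·y(1 − 4x²), with coefficients b_xxx = (−Δ_xxR^z + Δ_xxV_x^1 − Δ_xxV_x^2)/12, a_yyy = (Δ_yyR^z + Δ_yyV_y^1 − Δ_yyV_y^2)/12, b_xx = (−Δ_xR^z + Δ_xV_x^1 − Δ_xV_x^2)/8, a_yy = (Δ_yR^z + Δ_yV_y^1 − Δ_yV_y^2)/8, and a_xyy = −b_xxy = Δ_xyR^z/16. Then for every (x,y) ∈ ℝ², ∂_x V^y − ∂_y V^x = (V_x^1 − V_x^2 + V_y^2 − V_y^1) + Δ_xR^z·x + Δ_yR^z·y + Δ_xxR^z·(x² − 1/12) + Δ_yyR^z·(y² − 1/12) + Δ_xyR^z·xy. -/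
/-- The x-component of the third-order 2D reconstruction (eqn. 2.10). -/
noncomputable def V3x (vx1 dx1 dxx1 vx2 dx2 dxx2 ayy ayyy axyy x y : ℝ) : ℝ :=
  (vx1 + dx1 * x + dxx1 * (x ^ 2 - 1 / 12)) * (1 / 2 - y) +
    (vx2 + dx2 * x + dxx2 * (x ^ 2 - 1 / 12)) * (1 / 2 + y) +
    ayy * (1 - 4 * y ^ 2) + ayyy * y * (1 - 4 * y ^ 2) + axyy * x * (1 - 4 * y ^ 2)

/-- The y-component of the third-order 2D reconstruction (eqn. 2.10). -/
noncomputable def V3y (vy1 dy1 dyy1 vy2 dy2 dyy2 bxx bxxx bxxy x y : ℝ) : ℝ :=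
  (vy1 + dy1 * y + dyy1 * (y ^ 2 - 1 / 12)) * (1 / 2 - x) +
    (vy2 + dy2 * y + dyy2 * (y ^ 2 - 1 / 12)) * (1 / 2 + x) +
    bxx * (1 - 4 * x ^ 2) + bxxx * x * (1 - 4 * x ^ 2) + bxxy * y * (1 - 4 * x ^ 2)

/-- with interior coefficients chosen as in eqn. (2.13), the curl
of the third-order 2D reconstruction matches the prescribed quadratic
circulation polynomial at every point. -/
theorem stmt_4
    (vx1 dx1 dxx1 vx2 dx2 dxx2 vy1 dy1 dyy1 vy2 dy2 dyy2
      dxRz dyRz dxxRz dyyRz dxyRz ayy ayyy axyy bxx bxxx bxxy : ℝ)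
    (hbxxx : bxxx = (-dxxRz + dxx1 - dxx2) / 12)
    (hayyy : ayyy = (dyyRz + dyy1 - dyy2) / 12)
    (hbxx : bxx = (-dxRz + dx1 - dx2) / 8)
    (hayy : ayy = (dyRz + dy1 - dy2) / 8)
    (haxyy : axyy = dxyRz / 16)
    (hbxxy : bxxy = -(dxyRz / 16)) :
    ∀ x y : ℝ,
      deriv (fun x' : ℝ => V3y vy1 dy1 dyy1 vy2 dy2 dyy2 bxx bxxx bxxy x' y) x -
        deriv (fun y' : ℝ => V3x vx1 dx1 dxx1 vx2 dx2 dxx2 ayy ayyy axyy x y') y =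
      (vx1 - vx2 + vy2 - vy1) + dxRz * x + dyRz * y +
        dxxRz * (x ^ 2 - 1 / 12) + dyyRz * (y ^ 2 - 1 / 12) + dxyRz * (x * y) := by
  intro x y
  have key : ∀ c1 c2 b b3 d t : ℝ, HasDerivAt (fun s : ℝ => c1 * (1 / 2 - s) + c2 * (1 / 2 + s) +
      b * (1 - 4 * s ^ 2) + b3 * s * (1 - 4 * s ^ 2) + d * (1 - 4 * s ^ 2))
      (c2 - c1 - 8 * b * t + b3 * (1 - 12 * t ^ 2) - 8 * d * t) t := by
    intro c1 c2 b b3 d t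
    have hi := hasDerivAt_id' t
    have hq := ((hi.pow 2).const_mul 4).const_sub 1
    have h := (((((hi.const_sub (1 / 2)).const_mul c1).add
      ((hi.const_add (1 / 2)).const_mul c2)).add (hq.const_mul b)).add
      ((hi.const_mul b3).mul hq)).add (hq.const_mul d)
    refine h.congr_deriv ?_
    simp
    ring
  unfold V3x V3y
  rw [(key _ _ _ _ _ x).deriv, (key _ _ _ _ _ y).deriv]
  subst hbxxx hayyy hbxx hayy haxyy hbxxy
  ring
end

section
/- Consider the third-order curl-preserving reconstruction of the previous form: V^x(x,y) = [V_x^1 + Δ_xV_x^1·x + Δ_xxV_x^1·(x² − 1/12)](1/2 − y) + [V_x^2 + Δ_xV_x^2·x + Δ_xxV_x^2·(x² − 1/12)](1/2 + y) + a_yy(1 − 4y²) + a_yyy·y(1 − 4y²) + a_xyy·x(1 − 4y²) and V^y(x,y) = [V_y^1 + Δ_yV_y^1·y + Δ_yyV_y^1·(y² − 1/12)](1/2 − x) + [V_y^2 + Δ_yV_y^2·y + Δ_yyV_y^2·(y² − 1/12)](1/2 + x) + b_xx(1 − 4x²) + b_xxx·x(1 − 4x²) + b_xxy·y(1 − 4x²),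 with a_yy = (Δ_yR^z + Δ_yV_y^1 − Δ_yV_y^2)/8 and b_xx = (−Δ_xR^z + Δ_xV_x^1 − Δ_xV_x^2)/8 (the remaining interior coefficients a_yyy, a_xyy, b_xxx, b_xxy arbitrary). Then the zone averages over the unit square are ∫_{[-1/2,1/2]²} V^x dx dy = (V_x^1 + V_x^2)/2 + (Δ_yV_y^1 − Δ_yV_y^2 + Δ_yR^z)/12 and ∫_{[-1/2,1/2]²} V^y dx dy = (V_y^1 + V_y^2)/2 + (Δ_xV_x^1 − Δ_xV_x^2 − Δ_xR^z)/12. -/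
/-- Integral of a cubic over the centred unit interval. -/
theorem cubic_avg (f : ℝ → ℝ) (c0 c1 c2 c3 : ℝ)
    (hf : ∀ t, f t = c0 + c1 * t + c2 * t ^ 2 + c3 * t ^ 3) :
    ∫ t in (-(1:ℝ)/2)..(1/2), f t = c0 + c2 / 12 := by
  have h : ∀ t ∈ Set.uIcc (-(1:ℝ)/2) (1/2), HasDerivAt
      (fun t : ℝ => c0 * t + c1 / 2 * t ^ 2 + c2 / 3 * t ^ 3 + c3 / 4 * t ^ 4) (f t) t := by
    intro t _
    have h1 := (hasDerivAt_id' t).const_mul c0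
    have h2 := (hasDerivAt_pow 2 t).const_mul (c1 / 2)
    have h3 := (hasDerivAt_pow 3 t).const_mul (c2 / 3)
    have h4 := (hasDerivAt_pow 4 t).const_mul (c3 / 4)
    refine (((h1.add h2).add h3).add h4).congr_deriv ?_
    rw [hf]
    norm_num
    ring
  have hc : Continuous f := by
    rw [funext hf]
    fun_prop
  rw [intervalIntegral.integral_eq_sub_of_hasDerivAt h (hc.intervalIntegrable _ _)]
  ring

/-- zone averages of the third-order curl-preserving
reconstruction over the unit square (eqn. 2.19); `a_yy` and `b_xx` are fixed by
the constraint while the remaining interior coefficients are arbitrary. -/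
theorem stmt_5
    (vx1 dx1 dxx1 vx2 dx2 dxx2 vy1 dy1 dyy1 vy2 dy2 dyy2
      dxRz dyRz ayy ayyy axyy bxx bxxx bxxy : ℝ)
    (hayy : ayy = (dyRz + dy1 - dy2) / 8)
    (hbxx : bxx = (-dxRz + dx1 - dx2) / 8) :
    (∫ x in (-(1:ℝ)/2)..(1/2), ∫ y in (-(1:ℝ)/2)..(1/2),
        V3x vx1 dx1 dxx1 vx2 dx2 dxx2 ayy ayyy axyy x y) =
      (vx1 + vx2) / 2 + (dy1 - dy2 + dyRz) / 12 ∧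
    (∫ x in (-(1:ℝ)/2)..(1/2), ∫ y in (-(1:ℝ)/2)..(1/2),
        V3y vy1 dy1 dyy1 vy2 dy2 dyy2 bxx bxxx bxxy x y) =
      (vy1 + vy2) / 2 + (dx1 - dx2 - dxRz) / 12 := by
  constructor
  · rw [cubic_avg _ ((vx1 + vx2) / 2 - (dxx1 + dxx2) / 24 + 2 / 3 * ayy)
      ((dx1 + dx2) / 2 + 2 / 3 * axyy) ((dxx1 + dxx2) / 2) 0]
    · rw [hayy]
      ring
    · intro x
      rw [cubic_avg _ (((vx1 + dx1 * x + dxx1 * (x ^ 2 - 1 / 12)) +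
          (vx2 + dx2 * x + dxx2 * (x ^ 2 - 1 / 12))) / 2 + ayy + axyy * x)
        ((vx2 + dx2 * x + dxx2 * (x ^ 2 - 1 / 12)) -
          (vx1 + dx1 * x + dxx1 * (x ^ 2 - 1 / 12)) + ayyy)
        (-4 * (ayy + axyy * x)) (-4 * ayyy)]
      · ring
      · intro y
        unfold V3x
        ring
  · rw [cubic_avg _ ((vy1 + vy2) / 2 + bxx) (vy2 - vy1 + bxxx) (-4 * bxx) (-4 * bxxx)]
    · rw [hbxx]
      ring
    · intro x
      rw [cubic_avg _ ((vy1 - dyy1 / 12) * (1 / 2 - x) + (vy2 - dyy2 / 12) * (1 / 2 + x) +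
          (bxx + bxxx * x) * (1 - 4 * x ^ 2))
        (dy1 * (1 / 2 - x) + dy2 * (1 / 2 + x) + bxxy * (1 - 4 * x ^ 2))
        (dyy1 * (1 / 2 - x) + dyy2 * (1 / 2 + x)) 0]
      · ring
      · intro y
        unfold V3y
        ring
end

section
/- Let Δx, Δy > 0, let v^x, v^y ∈ ℝ, and let a, b : ℤ×ℤ → ℝ be grid functions, where a(i,j) represents the x-edge value J^x at edge (i, j+1/2) and b(i,j) represents the y-edge value J^y at edge (i+1/2, j). Assume the discrete circulation vanishes in every cell: for all i,j, (b(i,j) − b(i−1,j))/Δx = (a(i,j) − a(i,j−1))/Δy. Define the locally Lax-Friedrichs vertex potential φ(i,j) = (v^x/2)(a(i+1,j) + a(i,j)) − (|v^x|/2)(a(i+1,j) − a(i,j)) + (v^y/2)(b(i,j+1) + b(i,j)) − (|v^y|/2)(b(i,j+1) − b(i,j)) at vertex (i+1/2, j+1/2). Then for all i,j: (φ(i,j) − φ(i−1,j))/Δx = (v^x/(2Δx))(a(i+1,j) − a(i−1,j)) + (v^y/(2Δy))(a(i,j+1) − a(i,j−1)) − (|v^x|/(2Δx))(a(i+1,j)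 − 2a(i,j) + a(i−1,j)) − (|v^y|/(2Δy))(a(i,j+1) − 2a(i,j) + a(i,j−1)); i.e., the edge-based curl-free update with multidimensionally upwinded vertex potentials equals a centered advection discretization plus nonnegative-coefficient dissipation terms. -/
/-- The locally Lax-Friedrichs vertex potential at vertex (i+1/2, j+1/2)
(eqn. 2.29): centered averages of the adjacent edge components plus upwind
dissipation terms. -/
noncomputable def llfPot2 (vx vy : ℝ) (a b : ℤ × ℤ → ℝ) (i j : ℤ) : ℝ :=
  vx / 2 * (a (i + 1, j) + a (i, j)) - |vx| / 2 * (a (i + 1, j) - a (i, j)) +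
    vy / 2 * (b (i, j + 1) + b (i, j)) - |vy| / 2 * (b (i, j + 1) - b (i, j))

/-- on a discretely curl-free 2D mesh, the edge-based update built
from LLF vertex potentials equals a centered advection discretization plus
nonnegative-coefficient dissipation terms (eqn. 2.30). -/
theorem stmt_6 (Δx Δy : ℝ) (hΔx : 0 < Δx) (hΔy : 0 < Δy) (vx vy : ℝ)
    (a b : ℤ × ℤ → ℝ)
    (hcurl : ∀ i j : ℤ,
      (b (i, j) - b (i - 1, j)) / Δx = (a (i, j) - a (i, j - 1)) / Δy) :
    ∀ i j : ℤ,
      (llfPot2 vx vy a b i j - llfPot2 vx vy a b (i - 1) j) / Δx =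
        vx / (2 * Δx) * (a (i + 1, j) - a (i - 1, j)) +
          vy / (2 * Δy) * (a (i, j + 1) - a (i, j - 1)) -
          |vx| / (2 * Δx) * (a (i + 1, j) - 2 * a (i, j) + a (i - 1, j)) -
          |vy| / (2 * Δy) * (a (i, j + 1) - 2 * a (i, j) + a (i, j - 1)) := by
  intro i j
  have h0 := hcurl i j
  have h1 := hcurl i (j + 1)
  simp only [add_sub_cancel_right] at h1
  simp only [llfPot2, sub_add_cancel]
  linear_combination (vy / 2 - |vy| / 2) * h1 + (vy / 2 + |vy| / 2) * h0
end

section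
/- Define on ℝ³ the first-order reconstruction V^x(x,y,z) = V_x^1(y − 1/2)(z − 1/2) + V_x^2(y + 1/2)(1/2 − z) + V_x^3(1/2 − y)(z + 1/2) + V_x^4(y + 1/2)(z + 1/2), V^y(x,y,z) = V_y^1(z − 1/2)(x − 1/2) + V_y^2(z + 1/2)(1/2 − x) + V_y^3(1/2 − z)(x + 1/2) + V_y^4(z + 1/2)(x + 1/2), and V^z(x,y,z) = V_z^1(x − 1/2)(y − 1/2) + V_z^2(x + 1/2)(1/2 − y) + V_z^3(1/2 − x)(y + 1/2) + V_z^4(x + 1/2)(y + 1/2). Then for every (x,y,z) ∈ ℝ³: (∇×V)_x = ∂_y V^z − ∂_z V^y = (1/2)(V_y^1 − V_y^2 + V_y^3 − V_y^4 − V_z^1 − V_z^2 + V_z^3 + V_z^4) + (−V_y^1 + V_y^2 + V_y^3 − V_y^4 + V_z^1 − V_z^2 − V_z^3 + V_z^4)·x; (∇×V)_y = ∂_z V^x − ∂_x V^z = (1/2)(V_z^1 − V_z^2 + V_z^3 − V_z^4 − V_x^1 − V_x^2 + V_x^3 + V_x^4) + (−V_z^1 + V_z^2 + V_z^3 − V_z^4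 + V_x^1 − V_x^2 − V_x^3 + V_x^4)·y; (∇×V)_z = ∂_x V^y − ∂_y V^x = (1/2)(V_x^1 − V_x^2 + V_x^3 − V_x^4 − V_y^1 − V_y^2 + V_y^3 + V_y^4) + (−V_x^1 + V_x^2 + V_x^3 − V_x^4 + V_y^1 − V_y^2 − V_y^3 + V_y^4)·z. In particular, if all six face circulation conditions hold (V_y^3 + V_z^4 − V_y^4 − V_z^2 = 0, V_y^1 + V_z^3 − V_y^2 − V_z^1 = 0, V_z^3 + V_x^4 − V_z^4 − V_x^2 = 0, V_z^1 + V_x^3 − V_z^2 − V_x^1 = 0, V_x^3 + V_y^4 − V_x^4 − V_y^2 = 0, V_x^1 + V_y^3 − V_x^2 − V_y^1 = 0), then ∇×V vanishes identically. -/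
/-- x-component of the first-order 3D reconstruction (eqn. 3.4). -/
noncomputable def W1x (vx1 vx2 vx3 vx4 x y z : ℝ) : ℝ :=
  vx1 * (y - 1 / 2) * (z - 1 / 2) + vx2 * (y + 1 / 2) * (1 / 2 - z) +
    vx3 * (1 / 2 - y) * (z + 1 / 2) + vx4 * (y + 1 / 2) * (z + 1 / 2)

/-- y-component of the first-order 3D reconstruction (eqn. 3.5). -/
noncomputable def W1y (vy1 vy2 vy3 vy4 x y z : ℝ) : ℝ :=
  vy1 * (z - 1 / 2) * (x - 1 / 2) + vy2 * (z + 1 / 2) * (1 / 2 - x) +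
    vy3 * (1 / 2 - z) * (x + 1 / 2) + vy4 * (z + 1 / 2) * (x + 1 / 2)

/-- z-component of the first-order 3D reconstruction (eqn. 3.6). -/
noncomputable def W1z (vz1 vz2 vz3 vz4 x y z : ℝ) : ℝ :=
  vz1 * (x - 1 / 2) * (y - 1 / 2) + vz2 * (x + 1 / 2) * (1 / 2 - y) +
    vz3 * (1 / 2 - x) * (y + 1 / 2) + vz4 * (x + 1 / 2) * (y + 1 / 2)

/-- derivative of an affine function -/
theorem deriv_affine_aux (f : ℝ → ℝ) (a b t : ℝ) (h : ∀ s, f s = a * s + b) :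
    deriv f t = a := by
  have hf : f = fun s => a * s + b := funext h
  rw [hf]
  simpa using (((hasDerivAt_id t).const_mul a).add_const b).deriv

/-- the curl of the first-order 3D reconstruction is given by the
discrete face circulations (eqns. 3.7–3.9); in particular, if all six face
circulation conditions hold, the curl vanishes identically. -/
theorem stmt_8 (vx1 vx2 vx3 vx4 vy1 vy2 vy3 vy4 vz1 vz2 vz3 vz4 : ℝ) :
    ((∀ x y z : ℝ,
      deriv (fun y' : ℝ => W1z vz1 vz2 vz3 vz4 x y' z) y -
          deriv (fun z' : ℝ => W1y vy1 vy2 vy3 vy4 x y z') z =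
        (1 / 2) * (vy1 - vy2 + vy3 - vy4 - vz1 - vz2 + vz3 + vz4) +
          (-vy1 + vy2 + vy3 - vy4 + vz1 - vz2 - vz3 + vz4) * x) ∧
    (∀ x y z : ℝ,
      deriv (fun z' : ℝ => W1x vx1 vx2 vx3 vx4 x y z') z -
          deriv (fun x' : ℝ => W1z vz1 vz2 vz3 vz4 x' y z) x =
        (1 / 2) * (vz1 - vz2 + vz3 - vz4 - vx1 - vx2 + vx3 + vx4) +
          (-vz1 + vz2 + vz3 - vz4 + vx1 - vx2 - vx3 + vx4) * y) ∧
    (∀ x y z : ℝ,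
      deriv (fun x' : ℝ => W1y vy1 vy2 vy3 vy4 x' y z) x -
          deriv (fun y' : ℝ => W1x vx1 vx2 vx3 vx4 x y' z) y =
        (1 / 2) * (vx1 - vx2 + vx3 - vx4 - vy1 - vy2 + vy3 + vy4) +
          (-vx1 + vx2 + vx3 - vx4 + vy1 - vy2 - vy3 + vy4) * z)) ∧
    (vy3 + vz4 - vy4 - vz2 = 0 → vy1 + vz3 - vy2 - vz1 = 0 →
      vz3 + vx4 - vz4 - vx2 = 0 → vz1 + vx3 - vz2 - vx1 = 0 →
      vx3 + vy4 - vx4 - vy2 = 0 → vx1 + vy3 - vx2 - vy1 = 0 →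
      ∀ x y z : ℝ,
        deriv (fun y' : ℝ => W1z vz1 vz2 vz3 vz4 x y' z) y -
            deriv (fun z' : ℝ => W1y vy1 vy2 vy3 vy4 x y z') z = 0 ∧
        deriv (fun z' : ℝ => W1x vx1 vx2 vx3 vx4 x y z') z -
            deriv (fun x' : ℝ => W1z vz1 vz2 vz3 vz4 x' y z) x = 0 ∧
        deriv (fun x' : ℝ => W1y vy1 vy2 vy3 vy4 x' y z) x -
            deriv (fun y' : ℝ => W1x vx1 vx2 vx3 vx4 x y' z) y = 0) := by
  have hzy : ∀ x y z : ℝ, deriv (fun t : ℝ => W1z vz1 vz2 vz3 vz4 x t z) y =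
      vz1 * (x - 1 / 2) - vz2 * (x + 1 / 2) + vz3 * (1 / 2 - x) + vz4 * (x + 1 / 2) := by
    intro x y z
    refine deriv_affine_aux _ _ (W1z vz1 vz2 vz3 vz4 x 0 z) _ fun s => ?_
    simp only [W1z]
    ring
  have hzx : ∀ x y z : ℝ, deriv (fun t : ℝ => W1z vz1 vz2 vz3 vz4 t y z) x =
      vz1 * (y - 1 / 2) + vz2 * (1 / 2 - y) - vz3 * (y + 1 / 2) + vz4 * (y + 1 / 2) := by
    intro x y z
    refine deriv_affine_aux _ _ (W1z vz1 vz2 vz3 vz4 0 y z) _ fun s => ?_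
    simp only [W1z]
    ring
  have hyz : ∀ x y z : ℝ, deriv (fun t : ℝ => W1y vy1 vy2 vy3 vy4 x y t) z =
      vy1 * (x - 1 / 2) + vy2 * (1 / 2 - x) - vy3 * (x + 1 / 2) + vy4 * (x + 1 / 2) := by
    intro x y z
    refine deriv_affine_aux _ _ (W1y vy1 vy2 vy3 vy4 x y 0) _ fun s => ?_
    simp only [W1y]
    ring
  have hyx : ∀ x y z : ℝ, deriv (fun t : ℝ => W1y vy1 vy2 vy3 vy4 t y z) x =
      vy1 * (z - 1 / 2) - vy2 * (z + 1 / 2) + vy3 * (1 / 2 - z) + vy4 * (z + 1 / 2) := by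
    intro x y z
    refine deriv_affine_aux _ _ (W1y vy1 vy2 vy3 vy4 0 y z) _ fun s => ?_
    simp only [W1y]
    ring
  have hxy : ∀ x y z : ℝ, deriv (fun t : ℝ => W1x vx1 vx2 vx3 vx4 x t z) y =
      vx1 * (z - 1 / 2) + vx2 * (1 / 2 - z) - vx3 * (z + 1 / 2) + vx4 * (z + 1 / 2) := by
    intro x y z
    refine deriv_affine_aux _ _ (W1x vx1 vx2 vx3 vx4 x 0 z) _ fun s => ?_
    simp only [W1x]
    ring
  have hxz : ∀ x y z : ℝ, deriv (fun t : ℝ => W1x vx1 vx2 vx3 vx4 x y t) z =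
      vx1 * (y - 1 / 2) - vx2 * (y + 1 / 2) + vx3 * (1 / 2 - y) + vx4 * (y + 1 / 2) := by
    intro x y z
    refine deriv_affine_aux _ _ (W1x vx1 vx2 vx3 vx4 x y 0) _ fun s => ?_
    simp only [W1x]
    ring
  refine ⟨⟨fun x y z => ?_, fun x y z => ?_, fun x y z => ?_⟩, ?_⟩
  · rw [hzy, hyz]; ring
  · rw [hxz, hzx]; ring
  · rw [hyx, hxy]; ring
  · intro h1 h2 h3 h4 h5 h6 x y z
    refine ⟨?_, ?_, ?_⟩
    · rw [hzy, hyz]; linear_combination (x + 1 / 2) * h1 + (1 / 2 - x) * h2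
    · rw [hxz, hzx]; linear_combination (y + 1 / 2) * h3 + (1 / 2 - y) * h4
    · rw [hyx, hxy]; linear_combination (z + 1 / 2) * h5 + (1 / 2 - z) * h6
end

section
/- Consider the second-order 3D reconstruction: V^x(x,y,z) = [V_x^1 + Δ_xV_x^1·x](y − 1/2)(z − 1/2) + [V_x^2 + Δ_xV_x^2·x](y + 1/2)(1/2 − z) + [V_x^3 + Δ_xV_x^3·x](1/2 − y)(z + 1/2) + [V_x^4 + Δ_xV_x^4·x](y + 1/2)(z + 1/2) + a_yy(1 − 4y²) + a_zz(1 − 4z²) + a_yyz·z(1 − 4y²) + a_yzz·y(1 − 4z²), with the cyclic analogues for V^y and V^z given in the context. Choose the interior coefficients as: b_xxz = c_xxy = (−Δ_xV_x^1 + Δ_xV_x^2 + Δ_xV_x^3 − Δ_xV_x^4)/8; a_yyz = c_xyy = (−Δ_yV_y^1 + Δ_yV_y^2 + Δ_yV_y^3 − Δ_yV_y^4)/8; a_yzz = b_xzz = (−Δ_zV_z^1 + Δ_zV_z^2 + Δ_zV_z^3 − Δ_zV_z^4)/8; b_xx = −Δ_xR^z/8 + (Δ_xV_x^1 − Δ_xV_x^2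 + Δ_xV_x^3 − Δ_xV_x^4)/16; c_xx = Δ_xR^y/8 + (Δ_xV_x^1 + Δ_xV_x^2 − Δ_xV_x^3 − Δ_xV_x^4)/16; a_yy = Δ_yR^z/8 + (Δ_yV_y^1 + Δ_yV_y^2 − Δ_yV_y^3 − Δ_yV_y^4)/16; c_yy = −Δ_yR^x/8 + (Δ_yV_y^1 − Δ_yV_y^2 + Δ_yV_y^3 − Δ_yV_y^4)/16; a_zz = −Δ_zR^y/8 + (Δ_zV_z^1 − Δ_zV_z^2 + Δ_zV_z^3 − Δ_zV_z^4)/16; b_zz = Δ_zR^x/8 + (Δ_zV_z^1 + Δ_zV_z^2 − Δ_zV_z^3 − Δ_zV_z^4)/16. Then for every (x,y,z) ∈ ℝ³ the curl of V equals exactly: (∇×V)_x = (1/2)(V_y^1 − V_y^2 + V_y^3 − V_y^4 − V_z^1 − V_z^2 + V_z^3 + V_z^4) + (−V_y^1 + V_y^2 + V_y^3 − V_y^4 + V_z^1 − V_z^2 − V_z^3 + V_z^4)·x + Δ_yR^x·y + Δ_zR^x·z; (∇×V)_y = (1/2)(V_z^1 − V_z^2 + V_z^3 − V_z^4 − V_x^1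 − V_x^2 + V_x^3 + V_x^4) + (−V_z^1 + V_z^2 + V_z^3 − V_z^4 + V_x^1 − V_x^2 − V_x^3 + V_x^4)·y + Δ_xR^y·x + Δ_zR^y·z; (∇×V)_z = (1/2)(V_x^1 − V_x^2 + V_x^3 − V_x^4 − V_y^1 − V_y^2 + V_y^3 + V_y^4) + (−V_x^1 + V_x^2 + V_x^3 − V_x^4 + V_y^1 − V_y^2 − V_y^3 + V_y^4)·z + Δ_xR^z·x + Δ_yR^z·y. -/
/-- x-component of the second-order 3D reconstruction (eqn. 3.10). -/
noncomputable def W2x (vx1 vx2 vx3 vx4 dx1 dx2 dx3 dx4 ayy azz ayyz ayzz x y z : ℝ) : ℝ :=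
  (vx1 + dx1 * x) * (y - 1 / 2) * (z - 1 / 2) + (vx2 + dx2 * x) * (y + 1 / 2) * (1 / 2 - z) +
    (vx3 + dx3 * x) * (1 / 2 - y) * (z + 1 / 2) + (vx4 + dx4 * x) * (y + 1 / 2) * (z + 1 / 2) +
    ayy * (1 - 4 * y ^ 2) + azz * (1 - 4 * z ^ 2) +
    ayyz * z * (1 - 4 * y ^ 2) + ayzz * y * (1 - 4 * z ^ 2)

/-- y-component of the second-order 3D reconstruction (eqn. 3.11). -/
noncomputable def W2y (vy1 vy2 vy3 vy4 dy1 dy2 dy3 dy4 bxx bzz bxxz bxzz x y z : ℝ) : ℝ :=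
  (vy1 + dy1 * y) * (z - 1 / 2) * (x - 1 / 2) + (vy2 + dy2 * y) * (z + 1 / 2) * (1 / 2 - x) +
    (vy3 + dy3 * y) * (1 / 2 - z) * (x + 1 / 2) + (vy4 + dy4 * y) * (z + 1 / 2) * (x + 1 / 2) +
    bxx * (1 - 4 * x ^ 2) + bzz * (1 - 4 * z ^ 2) +
    bxxz * z * (1 - 4 * x ^ 2) + bxzz * x * (1 - 4 * z ^ 2)

/-- z-component of the second-order 3D reconstruction (eqn. 3.12). -/
noncomputable def W2z (vz1 vz2 vz3 vz4 dz1 dz2 dz3 dz4 cxx cyy cxxy cxyy x y z : ℝ) : ℝ :=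
  (vz1 + dz1 * z) * (x - 1 / 2) * (y - 1 / 2) + (vz2 + dz2 * z) * (x + 1 / 2) * (1 / 2 - y) +
    (vz3 + dz3 * z) * (1 / 2 - x) * (y + 1 / 2) + (vz4 + dz4 * z) * (x + 1 / 2) * (y + 1 / 2) +
    cxx * (1 - 4 * x ^ 2) + cyy * (1 - 4 * y ^ 2) +
    cxxy * y * (1 - 4 * x ^ 2) + cxyy * x * (1 - 4 * y ^ 2)

/-- The derivative of a quadratic polynomial, expressed through its values at `-1, 0, 1`. -/
theorem deriv_of_quadratic (f : ℝ → ℝ) (t : ℝ)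
    (h : ∀ s, f s = f 0 + (f 1 - f (-1)) / 2 * s + ((f 1 + f (-1)) / 2 - f 0) * s ^ 2) :
    deriv f t = (f 1 - f (-1)) / 2 + (f 1 + f (-1) - 2 * f 0) * t := by
  generalize f 0 = a at *
  generalize f 1 = b at *
  generalize f (-1) = c at *
  have hf : f = fun s => a + (b - c) / 2 * s + ((b + c) / 2 - a) * s ^ 2 := funext h
  have h1 : HasDerivAt (fun s : ℝ => a + (b - c) / 2 * s + ((b + c) / 2 - a) * s ^ 2)
      ((b - c) / 2 * 1 + ((b + c) / 2 - a) * (((2 : ℕ) : ℝ) * t ^ (2 - 1) * 1)) t :=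
    (((hasDerivAt_id t).const_mul ((b - c) / 2)).const_add a).add
      (((hasDerivAt_id t).pow 2).const_mul ((b + c) / 2 - a))
  rw [hf, h1.deriv]
  norm_num
  ring

/-- with the interior coefficients chosen as in eqns. (3.16) and
(3.17), the curl of the second-order 3D reconstruction matches the prescribed
linear curl field exactly at every point of space. -/
theorem stmt_10
    (vx1 vx2 vx3 vx4 vy1 vy2 vy3 vy4 vz1 vz2 vz3 vz4
      dx1 dx2 dx3 dx4 dy1 dy2 dy3 dy4 dz1 dz2 dz3 dz4
      dyRx dzRx dxRy dzRy dxRz dyRz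
      ayy azz ayyz ayzz bxx bzz bxxz bxzz cxx cyy cxxy cxyy : ℝ)
    (hbxxz : bxxz = (-dx1 + dx2 + dx3 - dx4) / 8)
    (hcxxy : cxxy = (-dx1 + dx2 + dx3 - dx4) / 8)
    (hayyz : ayyz = (-dy1 + dy2 + dy3 - dy4) / 8)
    (hcxyy : cxyy = (-dy1 + dy2 + dy3 - dy4) / 8)
    (hayzz : ayzz = (-dz1 + dz2 + dz3 - dz4) / 8)
    (hbxzz : bxzz = (-dz1 + dz2 + dz3 - dz4) / 8)
    (hbxx : bxx = -dxRz / 8 + (dx1 - dx2 + dx3 - dx4) / 16)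
    (hcxx : cxx = dxRy / 8 + (dx1 + dx2 - dx3 - dx4) / 16)
    (hayy : ayy = dyRz / 8 + (dy1 + dy2 - dy3 - dy4) / 16)
    (hcyy : cyy = -dyRx / 8 + (dy1 - dy2 + dy3 - dy4) / 16)
    (hazz : azz = -dzRy / 8 + (dz1 - dz2 + dz3 - dz4) / 16)
    (hbzz : bzz = dzRx / 8 + (dz1 + dz2 - dz3 - dz4) / 16) :
    ∀ x y z : ℝ,
      (deriv (fun y' : ℝ => W2z vz1 vz2 vz3 vz4 dz1 dz2 dz3 dz4 cxx cyy cxxy cxyy x y' z) y -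
          deriv (fun z' : ℝ => W2y vy1 vy2 vy3 vy4 dy1 dy2 dy3 dy4 bxx bzz bxxz bxzz x y z') z =
        (1 / 2) * (vy1 - vy2 + vy3 - vy4 - vz1 - vz2 + vz3 + vz4) +
          (-vy1 + vy2 + vy3 - vy4 + vz1 - vz2 - vz3 + vz4) * x + dyRx * y + dzRx * z) ∧
      (deriv (fun z' : ℝ => W2x vx1 vx2 vx3 vx4 dx1 dx2 dx3 dx4 ayy azz ayyz ayzz x y z') z -
          deriv (fun x' : ℝ => W2z vz1 vz2 vz3 vz4 dz1 dz2 dz3 dz4 cxx cyy cxxy cxyy x' y z) x =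
        (1 / 2) * (vz1 - vz2 + vz3 - vz4 - vx1 - vx2 + vx3 + vx4) +
          (-vz1 + vz2 + vz3 - vz4 + vx1 - vx2 - vx3 + vx4) * y + dxRy * x + dzRy * z) ∧
      (deriv (fun x' : ℝ => W2y vy1 vy2 vy3 vy4 dy1 dy2 dy3 dy4 bxx bzz bxxz bxzz x' y z) x -
          deriv (fun y' : ℝ => W2x vx1 vx2 vx3 vx4 dx1 dx2 dx3 dx4 ayy azz ayyz ayzz x y' z) y =
        (1 / 2) * (vx1 - vx2 + vx3 - vx4 - vy1 - vy2 + vy3 + vy4) +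
          (-vx1 + vx2 + vx3 - vx4 + vy1 - vy2 - vy3 + vy4) * z + dxRz * x + dyRz * y) := by
  intro x y z
  subst hbxxz hcxxy hayyz hcxyy hayzz hbxzz hbxx hcxx hayy hcyy hazz hbzz
  refine ⟨?_, ?_, ?_⟩
  all_goals
    rw [deriv_of_quadratic _ _ (fun s => by simp only [W2x, W2y, W2z]; ring),
      deriv_of_quadratic _ _ (fun s => by simp only [W2x, W2y, W2z]; ring)]
    simp only [W2x, W2y, W2z]
    ring
end

section
/- Define on ℝ³ the quadratic vector field R = (R^x, R^y, R^z) by R^x(x,y,z) = [−Δ_xxR^x/6 + (1/2)(V_y^1 − V_y^2 + V_y^3 − V_y^4 − V_z^1 − V_z^2 + V_z^3 + V_z^4)] + (−V_y^1 + V_y^2 + V_y^3 − V_y^4 + V_z^1 − V_z^2 − V_z^3 + V_z^4)·x + Δ_yR^x·y + Δ_zR^x·z + Δ_xxR^x(x² − 1/12) + Δ_yyR^x(y² − 1/12) + Δ_zzR^x(z² − 1/12) + Δ_xyR^x·xy + Δ_yzR^x·yz + Δ_xzR^x·xz, with R^y and R^z defined by the analogous cyclic formulas (given in the context). Then the divergence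 ∂_xR^x + ∂_yR^y + ∂_zR^z vanishes identically on ℝ³ if and only if the three linear relations hold: 2Δ_xxR^x + Δ_xyR^y + Δ_xzR^z = 0, Δ_xyR^x + 2Δ_yyR^y + Δ_yzR^z = 0, and Δ_xzR^x + Δ_yzR^y + 2Δ_zzR^z = 0. (The constant part of the divergence vanishes automatically for all values of the twelve edge parameters.) -/
/-- A generic quadratic scalar field on ℝ³ in the Legendre-type basis used for
the reconstructed curl components (eqns. 3.21–3.23). -/
noncomputable def quadField (c0 cx cy cz qxx qyy qzz qxy qyz qxz x y z : ℝ) : ℝ :=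
  c0 + cx * x + cy * y + cz * z +
    qxx * (x ^ 2 - 1 / 12) + qyy * (y ^ 2 - 1 / 12) + qzz * (z ^ 2 - 1 / 12) +
    qxy * (x * y) + qyz * (y * z) + qxz * (x * z)

/-- Derivative of a one-variable quadratic polynomial. -/
theorem deriv_quad_aux (f : ℝ → ℝ) (a b c t : ℝ)
    (hf : ∀ s, f s = a + b * s + c * s ^ 2) : deriv f t = b + 2 * c * t := by
  have h : f = fun s => a + b * s + c * s ^ 2 := funext hf
  have h1 : HasDerivAt (fun s : ℝ => a + b * s + c * s ^ 2)
      (b * 1 + c * ((2 : ℕ) * t ^ (2 - 1) * 1)) t :=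
    (((hasDerivAt_id' t).const_mul b).const_add a).add
      (((hasDerivAt_id' t).pow 2).const_mul c)
  rw [h, h1.deriv]
  norm_num
  ring

theorem quadField_deriv_x (c0 cx cy cz qxx qyy qzz qxy qyz qxz x y z : ℝ) :
    deriv (fun x' => quadField c0 cx cy cz qxx qyy qzz qxy qyz qxz x' y z) x =
      (cx + qxy * y + qxz * z) + 2 * qxx * x := by
  apply deriv_quad_aux _ (quadField c0 cx cy cz qxx qyy qzz qxy qyz qxz 0 y z)
  intro s
  simp only [quadField]
  ring

theorem quadField_deriv_y (c0 cx cy cz qxx qyy qzz qxy qyz qxz x y z : ℝ) :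
    deriv (fun y' => quadField c0 cx cy cz qxx qyy qzz qxy qyz qxz x y' z) y =
      (cy + qxy * x + qyz * z) + 2 * qyy * y := by
  apply deriv_quad_aux _ (quadField c0 cx cy cz qxx qyy qzz qxy qyz qxz x 0 z)
  intro s
  simp only [quadField]
  ring

theorem quadField_deriv_z (c0 cx cy cz qxx qyy qzz qxy qyz qxz x y z : ℝ) :
    deriv (fun z' => quadField c0 cx cy cz qxx qyy qzz qxy qyz qxz x y z') z =
      (cz + qyz * y + qxz * x) + 2 * qzz * z := by
  apply deriv_quad_aux _ (quadField c0 cx cy cz qxx qyy qzz qxy qyz qxz x y 0)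
  intro s
  simp only [quadField]
  ring

/-- the quadratic reconstructed curl field (eqns. 3.21–3.23) is
divergence-free on all of ℝ³ if and only if the three linear moment relations
(eqn. 3.24) hold; the constant part of the divergence vanishes automatically. -/
theorem stmt_11
    (vx1 vx2 vx3 vx4 vy1 vy2 vy3 vy4 vz1 vz2 vz3 vz4
      dyRx dzRx dxxRx dyyRx dzzRx dxyRx dyzRx dxzRx
      dxRy dzRy dxxRy dyyRy dzzRy dxyRy dyzRy dxzRy
      dxRz dyRz dxxRz dyyRz dzzRz dxyRz dyzRz dxzRz : ℝ) :
    (∀ x y z : ℝ,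
      deriv (fun x' : ℝ =>
        quadField (-dxxRx / 6 + (1 / 2) * (vy1 - vy2 + vy3 - vy4 - vz1 - vz2 + vz3 + vz4))
          (-vy1 + vy2 + vy3 - vy4 + vz1 - vz2 - vz3 + vz4) dyRx dzRx
          dxxRx dyyRx dzzRx dxyRx dyzRx dxzRx x' y z) x +
      deriv (fun y' : ℝ =>
        quadField (-dyyRy / 6 + (1 / 2) * (vz1 - vz2 + vz3 - vz4 - vx1 - vx2 + vx3 + vx4))
          dxRy (-vz1 + vz2 + vz3 - vz4 + vx1 - vx2 - vx3 + vx4) dzRy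
          dxxRy dyyRy dzzRy dxyRy dyzRy dxzRy x y' z) y +
      deriv (fun z' : ℝ =>
        quadField (-dzzRz / 6 + (1 / 2) * (vx1 - vx2 + vx3 - vx4 - vy1 - vy2 + vy3 + vy4))
          dxRz dyRz (-vx1 + vx2 + vx3 - vx4 + vy1 - vy2 - vy3 + vy4)
          dxxRz dyyRz dzzRz dxyRz dyzRz dxzRz x y z') z = 0) ↔
    (2 * dxxRx + dxyRy + dxzRz = 0 ∧
      dxyRx + 2 * dyyRy + dyzRz = 0 ∧
      dxzRx + dyzRy + 2 * dzzRz = 0) := by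
  simp only [quadField_deriv_x, quadField_deriv_y, quadField_deriv_z]
  constructor
  · intro h
    have hx := h 1 0 0
    have hy := h 0 1 0
    have hz := h 0 0 1
    refine ⟨?_, ?_, ?_⟩ <;> linarith
  · rintro ⟨h1, h2, h3⟩ x y z
    linear_combination x * h1 + y * h2 + z * h3
end

section
/- Let Δx, Δy, Δz > 0 and v^x, v^y, v^z ∈ ℝ (arbitrary signs). Let a, b, c : ℤ³ → ℝ be grid functions as in the context, and assume the discrete circulation vanishes on every face: for all i,j,k, (b(i,j,k) − b(i−1,j,k))/Δx = (a(i,j,k) − a(i,j−1,k))/Δy and (c(i,j,k) − c(i−1,j,k))/Δx = (a(i,j,k) − a(i,j,k−1))/Δz. Define the locally Lax-Friedrichs vertex potential φ(i,j,k) = (v^x/2)(a(i+1,j,k) + a(i,j,k)) − (|v^x|/2)(a(i+1,j,k) − a(i,j,k)) + (v^y/2)(b(i,j+1,k) + b(i,j,k)) − (|v^y|/2)(b(i,j+1,k) − b(i,j,k)) + (v^z/2)(c(i,j,k+1) + c(i,j,k)) − (|v^z|/2)(c(i,j,k+1) − c(i,j,k)). Then for all i,j,k: (φ(i,j,k) −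 φ(i−1,j,k))/Δx = (v^x/(2Δx))(a(i+1,j,k) − a(i−1,j,k)) + (v^y/(2Δy))(a(i,j+1,k) − a(i,j−1,k)) + (v^z/(2Δz))(a(i,j,k+1) − a(i,j,k−1)) − (|v^x|/(2Δx))(a(i+1,j,k) − 2a(i,j,k) + a(i−1,j,k)) − (|v^y|/(2Δy))(a(i,j+1,k) − 2a(i,j,k) + a(i,j−1,k)) − (|v^z|/(2Δz))(a(i,j,k+1) − 2a(i,j,k) + a(i,j,k−1)). -/
/-- The locally Lax-Friedrichs vertex potential at vertex (i+1/2,j+1/2,k+1/2):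
centered averages of the adjacent edge components plus upwind dissipation. -/
noncomputable def llfPot3 (vx vy vz : ℝ) (a b c : ℤ × ℤ × ℤ → ℝ) (i j k : ℤ) : ℝ :=
  vx / 2 * (a (i + 1, j, k) + a (i, j, k)) - |vx| / 2 * (a (i + 1, j, k) - a (i, j, k)) +
    vy / 2 * (b (i, j + 1, k) + b (i, j, k)) - |vy| / 2 * (b (i, j + 1, k) - b (i, j, k)) +
    vz / 2 * (c (i, j, k + 1) + c (i, j, k)) - |vz| / 2 * (c (i, j, k + 1) - c (i, j, k))

/-- on a discretely curl-free 3D mesh, the x-edge update built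
from LLF vertex potentials equals a centered advection discretization plus
dissipation terms (eqn. 3.36). -/
theorem stmt_13 (Δx Δy Δz : ℝ) (hΔx : 0 < Δx) (hΔy : 0 < Δy) (hΔz : 0 < Δz)
    (vx vy vz : ℝ) (a b c : ℤ × ℤ × ℤ → ℝ)
    (hcurlxy : ∀ i j k : ℤ,
      (b (i, j, k) - b (i - 1, j, k)) / Δx = (a (i, j, k) - a (i, j - 1, k)) / Δy)
    (hcurlxz : ∀ i j k : ℤ,
      (c (i, j, k) - c (i - 1, j, k)) / Δx = (a (i, j, k) - a (i, j, k - 1)) / Δz) :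
    ∀ i j k : ℤ,
      (llfPot3 vx vy vz a b c i j k - llfPot3 vx vy vz a b c (i - 1) j k) / Δx =
        vx / (2 * Δx) * (a (i + 1, j, k) - a (i - 1, j, k)) +
          vy / (2 * Δy) * (a (i, j + 1, k) - a (i, j - 1, k)) +
          vz / (2 * Δz) * (a (i, j, k + 1) - a (i, j, k - 1)) -
          |vx| / (2 * Δx) * (a (i + 1, j, k) - 2 * a (i, j, k) + a (i - 1, j, k)) -
          |vy| / (2 * Δy) * (a (i, j + 1, k) - 2 * a (i, j, k) + a (i, j - 1, k)) -
          |vz| / (2 * Δz) * (a (i, j, k + 1) - 2 * a (i, j, k) + a (i, j, k - 1)) := by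
  intro i j k
  have h1 := hcurlxy i (j + 1) k
  have h2 := hcurlxy i j k
  have h3 := hcurlxz i j (k + 1)
  have h4 := hcurlxz i j k
  simp only [add_sub_cancel_right] at h1 h3
  simp only [llfPot3, sub_add_cancel]
  linear_combination (vy / 2 - |vy| / 2) * h1 + (vy / 2 + |vy| / 2) * h2 +
    (vz / 2 - |vz| / 2) * h3 + (vz / 2 + |vz| / 2) * h4
end

section
/- Let J, v : ℝ × ℝ³ → ℝ³ be twice continuously differentiable and suppose the components of J satisfy the toy-system evolution equation ∂_t J_k + ∂_k(Σ_m v_m J_m) + Σ_m v_m C_mk = 0 for k = 1,2,3, where C_mk := ∂_m J_k − ∂_k J_m is the curl-involution tensor. Then for all indices m, k ∈ {1,2,3} and at every point, C_mk satisfies the linear transport-form evolution ∂_t C_mk + ∂_m(Σ_l v_l C_lk) − ∂_k(Σ_l v_l C_lm) = 0. In particular, the antisymmetric constraint tensor C evolves by a closed linear system, so the vanishing of C is an involution of the toy system. -/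
/-- Time partial derivative of a field on ℝ × ℝ³. -/
noncomputable def pt4 (f : ℝ → ℝ → ℝ → ℝ → ℝ) (t x y z : ℝ) : ℝ :=
  deriv (fun t' => f t' x y z) t

/-- Spatial partial derivative ∂_k (k-th coordinate direction of ℝ³). -/
noncomputable def pd3 (k : Fin 3) (f : ℝ → ℝ → ℝ → ℝ → ℝ) (t x y z : ℝ) : ℝ :=
  if k = 0 then deriv (fun x' => f t x' y z) x
  else if k = 1 then deriv (fun y' => f t x y' z) y
  else deriv (fun z' => f t x y z') z

/-- A curried field as a function on the product space. -/
def unc4 (f : ℝ → ℝ → ℝ → ℝ → ℝ) (p : ℝ × ℝ × ℝ × ℝ) : ℝ := f p.1 p.2.1 p.2.2.1 p.2.2.2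

/-- The spatial coordinate directions. -/
def dir3 (k : Fin 3) : ℝ × ℝ × ℝ × ℝ :=
  if k = 0 then (0, 1, 0, 0) else if k = 1 then (0, 0, 1, 0) else (0, 0, 0, 1)

lemma pt4_eq {f : ℝ → ℝ → ℝ → ℝ → ℝ} (hf : Differentiable ℝ (unc4 f)) (t x y z : ℝ) :
    pt4 f t x y z = fderiv ℝ (unc4 f) (t, x, y, z) (1, 0, 0, 0) := by
  have h : HasDerivAt (fun s : ℝ => ((s, x, y, z) : ℝ × ℝ × ℝ × ℝ)) (1, 0, 0, 0) t :=
    (hasDerivAt_id t).prodMk (hasDerivAt_const t (x, y, z))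
  exact ((hf (t, x, y, z)).hasFDerivAt.comp_hasDerivAt t h).deriv

lemma pd3_eq {f : ℝ → ℝ → ℝ → ℝ → ℝ} (hf : Differentiable ℝ (unc4 f)) (k : Fin 3)
    (t x y z : ℝ) :
    pd3 k f t x y z = fderiv ℝ (unc4 f) (t, x, y, z) (dir3 k) := by
  unfold pd3 dir3
  split_ifs
  · have h : HasDerivAt (fun s : ℝ => ((t, s, y, z) : ℝ × ℝ × ℝ × ℝ)) (0, 1, 0, 0) x :=
      (hasDerivAt_const x t).prodMk ((hasDerivAt_id x).prodMk (hasDerivAt_const x (y, z)))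
    exact ((hf (t, x, y, z)).hasFDerivAt.comp_hasDerivAt x h).deriv
  · have h : HasDerivAt (fun s : ℝ => ((t, x, s, z) : ℝ × ℝ × ℝ × ℝ)) (0, 0, 1, 0) y :=
      (hasDerivAt_const y t).prodMk ((hasDerivAt_const y x).prodMk
        ((hasDerivAt_id y).prodMk (hasDerivAt_const y z)))
    exact ((hf (t, x, y, z)).hasFDerivAt.comp_hasDerivAt y h).deriv
  · have h : HasDerivAt (fun s : ℝ => ((t, x, y, s) : ℝ × ℝ × ℝ × ℝ)) (0, 0, 0, 1) z :=
      (hasDerivAt_const z t).prodMk ((hasDerivAt_const z x).prodMk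
        ((hasDerivAt_const z y).prodMk (hasDerivAt_id z)))
    exact ((hf (t, x, y, z)).hasFDerivAt.comp_hasDerivAt z h).deriv

lemma diff_fderiv {F : ℝ × ℝ × ℝ × ℝ → ℝ} (hF : ContDiff ℝ 2 F) :
    Differentiable ℝ (fderiv ℝ F) :=
  (hF.fderiv_right (m := 1) (by norm_num)).differentiable (by norm_num)

lemma unc4_pd3 {f : ℝ → ℝ → ℝ → ℝ → ℝ} (hf : ContDiff ℝ 2 (unc4 f)) (k : Fin 3) :
    unc4 (pd3 k f) = fun p => fderiv ℝ (unc4 f) p (dir3 k) := by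
  funext p
  exact pd3_eq (hf.differentiable (by norm_num)) k _ _ _ _

lemma unc4_pt4 {f : ℝ → ℝ → ℝ → ℝ → ℝ} (hf : ContDiff ℝ 2 (unc4 f)) :
    unc4 (pt4 f) = fun p => fderiv ℝ (unc4 f) p (1, 0, 0, 0) := by
  funext p
  exact pt4_eq (hf.differentiable (by norm_num)) _ _ _ _

lemma diff_pd3 {f : ℝ → ℝ → ℝ → ℝ → ℝ} (hf : ContDiff ℝ 2 (unc4 f)) (k : Fin 3) :
    Differentiable ℝ (unc4 (pd3 k f)) := by
  rw [unc4_pd3 hf]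
  exact (diff_fderiv hf).clm_apply (differentiable_const _)

lemma diff_pt4 {f : ℝ → ℝ → ℝ → ℝ → ℝ} (hf : ContDiff ℝ 2 (unc4 f)) :
    Differentiable ℝ (unc4 (pt4 f)) := by
  rw [unc4_pt4 hf]
  exact (diff_fderiv hf).clm_apply (differentiable_const _)

lemma fderiv_fderiv_apply {F : ℝ × ℝ × ℝ × ℝ → ℝ} (hF : ContDiff ℝ 2 F)
    (a b p : ℝ × ℝ × ℝ × ℝ) :
    fderiv ℝ (fun q => fderiv ℝ F q a) p b = fderiv ℝ (fderiv ℝ F) p b a := by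
  rw [fderiv_clm_apply (diff_fderiv hF p) (differentiableAt_const _)]
  simp

lemma fderiv_swap {F : ℝ × ℝ × ℝ × ℝ → ℝ} (hF : ContDiff ℝ 2 F)
    (a b p : ℝ × ℝ × ℝ × ℝ) :
    fderiv ℝ (fun q => fderiv ℝ F q a) p b = fderiv ℝ (fun q => fderiv ℝ F q b) p a := by
  rw [fderiv_fderiv_apply hF, fderiv_fderiv_apply hF]
  exact (hF.contDiffAt.isSymmSndFDerivAt (by simp)) b a

lemma pd3_comm {f : ℝ → ℝ → ℝ → ℝ → ℝ} (hf : ContDiff ℝ 2 (unc4 f)) (m k : Fin 3)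
    (t x y z : ℝ) : pd3 m (pd3 k f) t x y z = pd3 k (pd3 m f) t x y z := by
  rw [pd3_eq (diff_pd3 hf k), pd3_eq (diff_pd3 hf m), unc4_pd3 hf, unc4_pd3 hf, fderiv_swap hf]

lemma pt4_pd3_comm {f : ℝ → ℝ → ℝ → ℝ → ℝ} (hf : ContDiff ℝ 2 (unc4 f)) (k : Fin 3)
    (t x y z : ℝ) : pt4 (pd3 k f) t x y z = pd3 k (pt4 f) t x y z := by
  rw [pt4_eq (diff_pd3 hf k), pd3_eq (diff_pt4 hf), unc4_pd3 hf, unc4_pt4 hf, fderiv_swap hf]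

lemma pt4_sub {f g : ℝ → ℝ → ℝ → ℝ → ℝ} (hf : Differentiable ℝ (unc4 f))
    (hg : Differentiable ℝ (unc4 g)) (t x y z : ℝ) :
    pt4 (fun t x y z => f t x y z - g t x y z) t x y z = pt4 f t x y z - pt4 g t x y z := by
  have h : unc4 (fun t x y z => f t x y z - g t x y z) = unc4 f - unc4 g := rfl
  rw [pt4_eq hf, pt4_eq hg, pt4_eq (by rw [h]; exact hf.sub hg), h, fderiv_sub (hf _) (hg _)]
  rfl

lemma pd3_neg_sub {f g : ℝ → ℝ → ℝ → ℝ → ℝ} (hf : Differentiable ℝ (unc4 f))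
    (hg : Differentiable ℝ (unc4 g)) (k : Fin 3) (t x y z : ℝ) :
    pd3 k (fun t x y z => -f t x y z - g t x y z) t x y z
      = -pd3 k f t x y z - pd3 k g t x y z := by
  have h : unc4 (fun t x y z => -f t x y z - g t x y z) = -unc4 f - unc4 g := rfl
  rw [pd3_eq hf, pd3_eq hg, pd3_eq (by rw [h]; exact hf.neg.sub hg), h,
    fderiv_sub (hf.neg _) (hg _), fderiv_neg]
  rfl

/-- if the C² field J satisfies
∂ₜJ_k + ∂_k(Σ_m v_m J_m) + Σ_m v_m C_mk = 0 with C_mk = ∂_m J_k − ∂_k J_m, then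
the curl-involution tensor C evolves by the closed linear system
∂ₜC_mk + ∂_m(Σ_l v_l C_lk) − ∂_k(Σ_l v_l C_lm) = 0. -/
theorem stmt_16
    (J v : Fin 3 → (ℝ → ℝ → ℝ → ℝ → ℝ))
    (hJ : ∀ i : Fin 3,
      ContDiff ℝ 2 fun p : ℝ × ℝ × ℝ × ℝ => J i p.1 p.2.1 p.2.2.1 p.2.2.2)
    (hv : ∀ i : Fin 3,
      ContDiff ℝ 2 fun p : ℝ × ℝ × ℝ × ℝ => v i p.1 p.2.1 p.2.2.1 p.2.2.2)
    (heq : ∀ k : Fin 3, ∀ t x y z : ℝ,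
      pt4 (J k) t x y z +
        pd3 k (fun t' x' y' z' => ∑ m : Fin 3, v m t' x' y' z' * J m t' x' y' z') t x y z +
        ∑ m : Fin 3, v m t x y z * (pd3 m (J k) t x y z - pd3 k (J m) t x y z) = 0) :
    ∀ m k : Fin 3, ∀ t x y z : ℝ,
      pt4 (fun t' x' y' z' => pd3 m (J k) t' x' y' z' - pd3 k (J m) t' x' y' z') t x y z +
        pd3 m (fun t' x' y' z' => ∑ l : Fin 3,
          v l t' x' y' z' * (pd3 l (J k) t' x' y' z' - pd3 k (J l) t' x' y' z')) t x y z -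
        pd3 k (fun t' x' y' z' => ∑ l : Fin 3,
          v l t' x' y' z' * (pd3 l (J m) t' x' y' z' - pd3 m (J l) t' x' y' z')) t x y z = 0 := by
  intro m k t x y z
  have hJ' : ∀ i, ContDiff ℝ 2 (unc4 (J i)) := hJ
  have hχ : ContDiff ℝ 2
      (unc4 (fun t' x' y' z' => ∑ m : Fin 3, v m t' x' y' z' * J m t' x' y' z')) :=
    ContDiff.sum fun i _ => (hv i).mul (hJ i)
  generalize (fun t' x' y' z' => ∑ m : Fin 3, v m t' x' y' z' * J m t' x' y' z') = χ at heq hχ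
  have hA : ∀ k : Fin 3, (fun t' x' y' z' => ∑ l : Fin 3,
      v l t' x' y' z' * (pd3 l (J k) t' x' y' z' - pd3 k (J l) t' x' y' z'))
      = fun t' x' y' z' => -pt4 (J k) t' x' y' z' - pd3 k χ t' x' y' z' := by
    intro k
    funext t x y z
    linarith [heq k t x y z]
  rw [hA k, hA m, pt4_sub (diff_pd3 (hJ' k) m) (diff_pd3 (hJ' m) k),
    pd3_neg_sub (diff_pt4 (hJ' k)) (diff_pd3 hχ k),
    pd3_neg_sub (diff_pt4 (hJ' m)) (diff_pd3 hχ m),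
    pt4_pd3_comm (hJ' k), pt4_pd3_comm (hJ' m), pd3_comm hχ m k]
  ring
end

section
/- Let A, R₀ ∈ ℝ and σ, c₀, γ > 0. Define J_r : (0,∞) → ℝ by J_r(r) = (2A/(√π·σ))·exp(−(r − R₀)²/σ²), and let ρ : (0,∞) → ℝ be a differentiable function satisfying the ODE ρ'(r) = −(ρ(r)·J_r(r)·c₀²/(γ² + J_r(r)²·c₀²))·(2J_r'(r) + J_r(r)/r) for all r > 0. For x ∈ ℝ² \ {0} set r = |x|, define the curl-free vector field J(x) = J_r(r)·x/r, the density ϱ(x) = ρ(r), and the pressure p(x) = γ²·ρ(r). Then the momentum flux tensor is divergence-free away from the origin: for k = 1,2 and every x ≠ 0, Σ_{i=1,2} ∂_i ( δ_ik·p(x) + ϱ(x)·c₀²·J_i(x)·J_k(x) ) = 0. Consequently (ρ, v = 0, J) is a stationary solution of the toy system ∂_t ρ + ∇·(ρv) = 0, ∂_t(ρv_k) + ∂_i(ρ v_i v_k + δ_ik p + ρ c₀² J_i J_k) = 0, ∂_t J_k + ∂_k(v_m J_m) + v_m(∂_m J_k − ∂_k J_m) = 0 with closure p = γ²ρ. 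-/
/-- The radial profile J_r(r) = (2A/(√π σ)) exp(−(r−R₀)²/σ²) (eqn. 6.8). -/
noncomputable def Jrad (A R0 σ r : ℝ) : ℝ :=
  2 * A / (Real.sqrt Real.pi * σ) * Real.exp (-((r - R0) ^ 2) / σ ^ 2)

/-- The radial coordinate r = |x| on ℝ². -/
noncomputable def radf (x : ℝ × ℝ) : ℝ :=
  Real.sqrt (x.1 ^ 2 + x.2 ^ 2)

/-- The radial (curl-free) vector field J(x) = J_r(|x|)·x/|x|. -/
noncomputable def Jf (A R0 σ : ℝ) (i : Fin 2) (x : ℝ × ℝ) : ℝ :=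
  Jrad A R0 σ (radf x) * (if i = 0 then x.1 else x.2) / radf x

/-- Partial derivative in the i-th coordinate direction of ℝ². -/
noncomputable def pd2 (i : Fin 2) (f : ℝ × ℝ → ℝ) (x : ℝ × ℝ) : ℝ :=
  if i = 0 then deriv (fun s => f (s, x.2)) x.1
  else deriv (fun s => f (x.1, s)) x.2


lemma radf_pos_aux (x : ℝ × ℝ) (hx : x ≠ 0) : 0 < x.1 ^ 2 + x.2 ^ 2 := by
  by_contra h
  apply hx
  have h1 : x.1 = 0 := by nlinarith [sq_nonneg x.1, sq_nonneg x.2]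
  have h2 : x.2 = 0 := by nlinarith [sq_nonneg x.1, sq_nonneg x.2]
  exact Prod.ext h1 h2

lemma radf_hd1 (a b : ℝ) (h : 0 < a ^ 2 + b ^ 2) :
    HasDerivAt (fun s => radf (s, b)) (a / radf (a, b)) a := by
  have h1 : HasDerivAt (fun s : ℝ => s ^ 2 + b ^ 2) (2 * a) a := by
    simpa using (hasDerivAt_pow 2 a).add_const (b ^ 2)
  have h2 := h1.sqrt h.ne'
  unfold radf
  convert h2 using 1
  field_simp

lemma radf_swap (a b : ℝ) : radf (a, b) = radf (b, a) := by
  simp [radf, add_comm]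

lemma radf_hd2 (a b : ℝ) (h : 0 < a ^ 2 + b ^ 2) :
    HasDerivAt (fun s => radf (a, s)) (b / radf (a, b)) b := by
  have h1 := radf_hd1 b a (by linarith)
  rw [radf_swap a b]
  convert h1 using 2
  exact radf_swap _ _

lemma Jrad_diff (A R0 σ r : ℝ) : DifferentiableAt ℝ (Jrad A R0 σ) r := by
  unfold Jrad
  fun_prop

/-- Divergence part, abstractly: derivative of the flux along a curve. -/
lemma flux_hd (ρ J R u w : ℝ → ℝ) (d c g s ρ' J' R' u' w' : ℝ) (hR0 : R s ≠ 0)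
    (hρ : HasDerivAt ρ ρ' (R s)) (hJ : HasDerivAt J J' (R s)) (hR : HasDerivAt R R' s)
    (hu : HasDerivAt u u' s) (hw : HasDerivAt w w' s) :
    HasDerivAt (fun s => d * (g ^ 2 * ρ (R s)) +
        ρ (R s) * c ^ 2 * (J (R s) * u s / R s) * (J (R s) * w s / R s))
      (d * (g ^ 2 * (ρ' * R')) +
        c ^ 2 * (ρ' * R' * J (R s) ^ 2 * u s * w s / R s ^ 2
          + ρ (R s) * (2 * J (R s) * J' * R') * u s * w s / R s ^ 2
          + ρ (R s) * J (R s) ^ 2 * (u' * w s + u s * w') / R s ^ 2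
          - 2 * ρ (R s) * J (R s) ^ 2 * u s * w s * R' / R s ^ 3)) s := by
  have h1 := hρ.comp s hR
  have h2 := hJ.comp s hR
  have h3 := ((h1.const_mul (g ^ 2)).const_mul d).add
    (((h1.mul_const (c ^ 2)).mul ((h2.mul hu).div hR hR0)).mul ((h2.mul hw).div hR hR0))
  refine h3.congr_deriv ?_
  simp only [Function.comp, Pi.mul_apply, Pi.div_apply]
  field_simp
  ring

lemma main_div (A R0 σ c0 γ : ℝ) (hγ : 0 < γ)
    (ρ : ℝ → ℝ)
    (hρ : ∀ r : ℝ, 0 < r →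
      HasDerivAt ρ
        (-(ρ r * Jrad A R0 σ r * c0 ^ 2 / (γ ^ 2 + (Jrad A R0 σ r) ^ 2 * c0 ^ 2)) *
          (2 * deriv (Jrad A R0 σ) r + Jrad A R0 σ r / r)) r)
    (k : Fin 2) (x : ℝ × ℝ) (hx : x ≠ 0) :
      (∑ i : Fin 2,
        pd2 i (fun x' : ℝ × ℝ =>
          (if i = k then (1 : ℝ) else 0) * (γ ^ 2 * ρ (radf x')) +
            ρ (radf x') * c0 ^ 2 * Jf A R0 σ i x' * Jf A R0 σ k x') x) = 0 := by
  have hp := radf_pos_aux x hx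
  obtain ⟨a, b⟩ := x
  simp only at hp
  have hr : 0 < radf (a, b) := Real.sqrt_pos.mpr hp
  have hr2 : radf (a, b) ^ 2 = a ^ 2 + b ^ 2 := Real.sq_sqrt hp.le
  have hD := hρ _ hr
  have hJ := (Jrad_diff A R0 σ (radf (a, b))).hasDerivAt
  have hode : ∀ D, D = (-(ρ (radf (a, b)) * Jrad A R0 σ (radf (a, b)) * c0 ^ 2 /
      (γ ^ 2 + (Jrad A R0 σ (radf (a, b))) ^ 2 * c0 ^ 2)) *
          (2 * deriv (Jrad A R0 σ) (radf (a, b)) + Jrad A R0 σ (radf (a, b)) / radf (a, b))) →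
      (γ ^ 2 + (Jrad A R0 σ (radf (a, b))) ^ 2 * c0 ^ 2) * D * radf (a, b) +
       ρ (radf (a, b)) * Jrad A R0 σ (radf (a, b)) * c0 ^ 2 *
        (2 * deriv (Jrad A R0 σ) (radf (a, b)) * radf (a, b) + Jrad A R0 σ (radf (a, b))) = 0 := by
    intro D h
    have : γ ^ 2 + (Jrad A R0 σ (radf (a, b))) ^ 2 * c0 ^ 2 ≠ 0 := by positivity
    rw [h]
    field_simp
    ring
  generalize hDe : (-(ρ (radf (a, b)) * Jrad A R0 σ (radf (a, b)) * c0 ^ 2 /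
      (γ ^ 2 + (Jrad A R0 σ (radf (a, b))) ^ 2 * c0 ^ 2)) *
          (2 * deriv (Jrad A R0 σ) (radf (a, b)) + Jrad A R0 σ (radf (a, b)) / radf (a, b))) = D
    at hD hode
  have ho := hode D rfl
  clear hode hDe
  have hR1 := radf_hd1 a b hp
  have hR2 := radf_hd2 a b hp
  rw [Fin.sum_univ_two]
  fin_cases k
  · have e1 := (flux_hd ρ (Jrad A R0 σ) (fun s => radf (s, b)) (fun s => s) (fun s => s) 1 c0 γ a
      _ _ _ _ _ hr.ne' hD hJ hR1 (hasDerivAt_id a) (hasDerivAt_id a)).deriv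
    have e2 := (flux_hd ρ (Jrad A R0 σ) (fun s => radf (a, s)) (fun s => s) (fun s => a) 0 c0 γ b
      _ _ _ _ _ hr.ne' hD hJ hR2 (hasDerivAt_id b) (hasDerivAt_const b a)).deriv
    simp only [pd2, Jf, Fin.zero_eta, Fin.isValue, if_true, one_ne_zero, if_false]
    rw [e1, e2]
    generalize deriv (Jrad A R0 σ) (radf (a, b)) = J' at *
    generalize Jrad A R0 σ (radf (a, b)) = J at *
    generalize ρ (radf (a, b)) = q at *
    generalize radf (a, b) = r at *
    field_simp
    linear_combination a * r ^ 2 * ho - a * c0 ^ 2 * J * (r * (D * J + 2 * q * J') - 2 * J * q) * hr2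
  · have e1 := (flux_hd ρ (Jrad A R0 σ) (fun s => radf (s, b)) (fun s => s) (fun s => b) 0 c0 γ a
      _ _ _ _ _ hr.ne' hD hJ hR1 (hasDerivAt_id a) (hasDerivAt_const a b)).deriv
    have e2 := (flux_hd ρ (Jrad A R0 σ) (fun s => radf (a, s)) (fun s => s) (fun s => s) 1 c0 γ b
      _ _ _ _ _ hr.ne' hD hJ hR2 (hasDerivAt_id b) (hasDerivAt_id b)).deriv
    simp only [pd2, Jf, Fin.mk_one, Fin.isValue, if_true, zero_ne_one, one_ne_zero, if_false]
    rw [e1, e2]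
    generalize deriv (Jrad A R0 σ) (radf (a, b)) = J' at *
    generalize Jrad A R0 σ (radf (a, b)) = J at *
    generalize ρ (radf (a, b)) = q at *
    generalize radf (a, b) = r at *
    field_simp
    linear_combination b * r ^ 2 * ho - b * c0 ^ 2 * J * (r * (D * J + 2 * q * J') - 2 * J * q) * hr2

/-- with J_r as above and ρ solving the equilibrium ODE (6.10),
the momentum flux tensor δ_ik p + ϱ c₀² J_i J_k is divergence-free away from
the origin; consequently (ρ, v = 0, J) is a stationary solution of the toy
system with closure p = γ²ρ. -/
theorem stmt_17 (A R0 σ c0 γ : ℝ) (hσ : 0 < σ) (hc0 : 0 < c0) (hγ : 0 < γ)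
    (ρ : ℝ → ℝ)
    (hρ : ∀ r : ℝ, 0 < r →
      HasDerivAt ρ
        (-(ρ r * Jrad A R0 σ r * c0 ^ 2 / (γ ^ 2 + (Jrad A R0 σ r) ^ 2 * c0 ^ 2)) *
          (2 * deriv (Jrad A R0 σ) r + Jrad A R0 σ r / r)) r) :
    (∀ k : Fin 2, ∀ x : ℝ × ℝ, x ≠ 0 →
      (∑ i : Fin 2,
        pd2 i (fun x' : ℝ × ℝ =>
          (if i = k then (1 : ℝ) else 0) * (γ ^ 2 * ρ (radf x')) +
            ρ (radf x') * c0 ^ 2 * Jf A R0 σ i x' * Jf A R0 σ k x') x) = 0) ∧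
    (∀ velo : Fin 2 → ℝ × ℝ → ℝ, (∀ m : Fin 2, ∀ x : ℝ × ℝ, velo m x = 0) →
      ∀ t : ℝ, ∀ x : ℝ × ℝ, x ≠ 0 →
        (deriv (fun _ : ℝ => ρ (radf x)) t +
          ∑ i : Fin 2, pd2 i (fun x' => ρ (radf x') * velo i x') x = 0) ∧
        (∀ k : Fin 2,
          deriv (fun _ : ℝ => ρ (radf x) * velo k x) t +
            ∑ i : Fin 2,
              pd2 i (fun x' =>
                ρ (radf x') * velo i x' * velo k x' +
                  (if i = k then (1 : ℝ) else 0) * (γ ^ 2 * ρ (radf x')) +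
                  ρ (radf x') * c0 ^ 2 * Jf A R0 σ i x' * Jf A R0 σ k x') x = 0) ∧
        (∀ k : Fin 2,
          deriv (fun _ : ℝ => Jf A R0 σ k x) t +
            pd2 k (fun x' => ∑ m : Fin 2, velo m x' * Jf A R0 σ m x') x +
            ∑ m : Fin 2,
              velo m x * (pd2 m (Jf A R0 σ k) x - pd2 k (Jf A R0 σ m) x) = 0)) := by
  have hm := main_div A R0 σ c0 γ hγ ρ hρ
  refine ⟨hm, ?_⟩
  intro velo hv t x hx
  refine ⟨?_, ?_, ?_⟩
  · simp [hv, pd2]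
  · intro k
    have := hm k x hx
    simpa only [hv, mul_zero, zero_add, deriv_const] using this
  · intro k
    simp [hv, pd2]
end
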